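/- Let D ⊂ ℝ^{2n+1} be a bounded open set and s ≥ 0 an integer. Then there exists a constant C > 0 such that for every smooth contact vector field X : cl(D) → ℝ^{2n+1}, the generating function g = η₀(X), given by g(x) = X^{2n+1}(x) − Σ_{j=1}^n x^{n+j} X^j(x), satisfies ‖g‖_{D,s+1} ≤ C Σ_{i=1}^{2n+1} ‖X^i‖_{D,s}. In particular, if the components of a contact vector field have finite Folland–Stein norm of order s, then its generating function has finite Folland–Stein norm of order s + 1 (a gain of one derivative). -/

import Mathlib

/-!
For a contact field `X` with `g = η₀(X)`, the contact condition against the horizontal frame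
reads `X_j g = X^{n+j}` and `X_{n+j} g = -X^j`: every first horizontal derivative of `g` is, up to
sign, a component of `X`. Hence the part of `‖g‖_{D,s+1}` carrying at least one derivative is
controlled by the norms `‖X^i‖_{D,s}`, and only `‖g‖_{D,0}` is left, which Minkowski's inequality
bounds because the coefficients `x^{n+j}` of `η₀` are bounded on `D`. The constant is `1 + R` with
`R` a bound for those coefficients, uniformly in `s`.
-/

open MeasureTheory Bornology

noncomputable section

variable {E : Type*} [NormedAddCommGroup E] [NormedSpace ℝ E]

/-- The standard contact form `η₀ = dx^{2n+1} - Σ x^{n+j} dx^j` on `ℝ^{2n+1}`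
(0-indexed coordinates): `η₀(x)(v) = v_{2n} - Σ_{j<n} x_{n+j} v_j`. -/
def eta0 (n : ℕ) (x v : Fin (2*n+1) → ℝ) : ℝ :=
  v ⟨2*n, by omega⟩ -
    ∑ j : Fin n, x ⟨n + j, by have := j.2; omega⟩ * v ⟨j, by have := j.2; omega⟩

/-- `dη₀ = Σ_{j<n} dx^j ∧ dx^{n+j}`. -/
def dEta0 (n : ℕ) (u v : Fin (2*n+1) → ℝ) : ℝ :=
  ∑ j : Fin n,
    (u ⟨j, by have := j.2; omega⟩ * v ⟨n + j, by have := j.2; omega⟩ -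
     u ⟨n + j, by have := j.2; omega⟩ * v ⟨j, by have := j.2; omega⟩)

/-- The horizontal vector fields: for `j < n`, `X_j = ∂_j + x_{n+j} ∂_{2n}`;
for `n ≤ j < 2n`, `X_j = ∂_j` (0-indexed). -/
def Xvec (n : ℕ) (j : Fin (2*n)) (x : Fin (2*n+1) → ℝ) : Fin (2*n+1) → ℝ :=
  if h : (j : ℕ) < n then
    (Pi.single (⟨j, by omega⟩ : Fin (2*n+1)) 1 : Fin (2*n+1) → ℝ)
      + x ⟨n + j, by omega⟩ • (Pi.single (⟨2*n, by omega⟩ : Fin (2*n+1)) 1 : Fin (2*n+1) → ℝ)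
  else
    (Pi.single (⟨j, by have := j.2; omega⟩ : Fin (2*n+1)) 1 : Fin (2*n+1) → ℝ)

/-- The horizontal derivative `X_j f`. -/
def hDeriv (n : ℕ) (j : Fin (2*n)) (f : (Fin (2*n+1) → ℝ) → E)
    (x : Fin (2*n+1) → ℝ) : E :=
  fderiv ℝ f x (Xvec n j x)

/-- Iterated horizontal derivative `X_I f = X_{i₁} ⋯ X_{i_t} f`. -/
def XI (n : ℕ) : List (Fin (2*n)) → ((Fin (2*n+1) → ℝ) → E) → ((Fin (2*n+1) → ℝ) → E)
  | [], f => f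
  | j :: I, f => hDeriv n j (XI n I f)

/-- Squared Folland–Stein norm `‖f‖_{D,s}² = Σ_{|I| ≤ s} ∫_D ‖X_I f‖²`. -/
def fsNormSq (n : ℕ) (D : Set (Fin (2*n+1) → ℝ)) (s : ℕ)
    (f : (Fin (2*n+1) → ℝ) → E) : ℝ :=
  ∑ t ∈ Finset.range (s+1), ∑ I : Fin t → Fin (2*n),
    ∫ x in D, ‖XI n (List.ofFn I) f x‖^2

/-- The Folland–Stein norm `‖f‖_{D,s}`. -/
def fsNorm (n : ℕ) (D : Set (Fin (2*n+1) → ℝ)) (s : ℕ)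
    (f : (Fin (2*n+1) → ℝ) → E) : ℝ :=
  Real.sqrt (fsNormSq n D s f)

/-- Ordinary partial derivative `∂_i f`. -/
def pDeriv (n : ℕ) (i : Fin (2*n+1)) (f : (Fin (2*n+1) → ℝ) → E)
    (x : Fin (2*n+1) → ℝ) : E :=
  fderiv ℝ f x (Pi.single i 1 : Fin (2*n+1) → ℝ)

/-- Iterated ordinary partial derivative. -/
def pI (n : ℕ) : List (Fin (2*n+1)) → ((Fin (2*n+1) → ℝ) → E) → ((Fin (2*n+1) → ℝ) → E)
  | [], f => f
  | i :: I, f => pDeriv n i (pI n I f)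

/-- The Reeb derivative `T₀ f = ∂_{2n} f` (0-indexed). -/
def T0Deriv (n : ℕ) (f : (Fin (2*n+1) → ℝ) → E) (x : Fin (2*n+1) → ℝ) : E :=
  fderiv ℝ f x (Pi.single (⟨2*n, by omega⟩ : Fin (2*n+1)) 1 : Fin (2*n+1) → ℝ)

/-- `X` is a contact vector field on `D`:  `dη₀(X, X_j) + X_j(η₀(X)) = 0` for all
horizontal `X_j`. -/
def IsContactVF (n : ℕ) (D : Set (Fin (2*n+1) → ℝ))
    (X : (Fin (2*n+1) → ℝ) → (Fin (2*n+1) → ℝ)) : Prop :=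
  ∀ j : Fin (2*n), ∀ x ∈ D,
    dEta0 n (X x) (Xvec n j x) + hDeriv n j (fun y => eta0 n y (X y)) x = 0

/-- The contact vector field with generating function `g`:
`X_g = g T₀ + Σ_j (-(X_{n+j} g) X_j + (X_j g) X_{n+j})`. -/
def genVF (n : ℕ) (g : (Fin (2*n+1) → ℝ) → ℝ) (x : Fin (2*n+1) → ℝ) :
    Fin (2*n+1) → ℝ :=
  g x • (Pi.single (⟨2*n, by omega⟩ : Fin (2*n+1)) 1 : Fin (2*n+1) → ℝ)
  + ∑ j : Fin n,
      (-(hDeriv n (⟨n + j, by have := j.2; omega⟩ : Fin (2*n)) g x) •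
          Xvec n (⟨j, by have := j.2; omega⟩ : Fin (2*n)) x
        + (hDeriv n (⟨j, by have := j.2; omega⟩ : Fin (2*n)) g x) •
          Xvec n (⟨n + j, by have := j.2; omega⟩ : Fin (2*n)) x)

open Set Filter Topology ContDiff

section BoundaryRegularity

variable {V : Type*} [NormedAddCommGroup V] [NormedSpace ℝ V] {D : Set V} {f : V → E}

/-- Cusps of `D` may destroy unique differentiability of `closure D`, so the derivative on the
boundary is taken as a limit from `D`; by density of `D` it agrees there with the continuous first
Taylor coefficient that smoothness on `closure D` provides locally. -/
theorem contDiffOn_extendFrom_fderiv (hD : IsOpen D) (hf : ContDiffOn ℝ ∞ f (closure D)) :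
    ContDiffOn ℝ ∞ (extendFrom D (fderiv ℝ f)) (closure D) := by
  refine fun x hx => contDiffWithinAt_infty.2 fun m => ?_
  obtain ⟨u, hu, -, -, f', hff', hf'⟩ :=
    (contDiffWithinAt_succ_iff_hasFDerivWithinAt' (n := m) (by simp)).1
      ((hf x hx).of_le (mod_cast le_top))
  rw [insert_eq_of_mem hx] at hu
  have hcont : ∀ᶠ y in 𝓝[closure D] x, ContinuousWithinAt f' (closure D) y := by
    have := hf'.eventually (by simp)
    rw [insert_eq_of_mem hx] at this
    exact this.mono fun y hy => hy.continuousWithinAt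
  have hext : extendFrom D (fderiv ℝ f) =ᶠ[𝓝[closure D] x] f' := by
    filter_upwards [eventually_eventually_nhdsWithin.2 hu, hcont, self_mem_nhdsWithin]
      with y huy hcy hy
    have hfderiv : f' =ᶠ[𝓝[D] y] fderiv ℝ f := by
      filter_upwards [nhdsWithin_mono y subset_closure huy, self_mem_nhdsWithin] with z hzu hzD
      exact ((hff' z hzu).hasFDerivAt
        (mem_of_superset (hD.mem_nhds hzD) subset_closure)).fderiv.symm
    exact extendFrom_eq hy ((hcy.mono subset_closure).tendsto.congr' hfderiv)
  exact hf'.congr_of_eventuallyEq hext (hext.self_of_nhdsWithin hx)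

end BoundaryRegularity

section WeightedMinkowski

variable {α : Type*} [MeasurableSpace α] {μ : Measure α} {p : ENNReal} {φ : α → ℝ} {f : α → E}
  {R : ℝ}

theorem memLp_smul_of_ae_abs_le (hφ : AEStronglyMeasurable φ μ) (hR : ∀ᵐ x ∂μ, |φ x| ≤ R)
    (hf : MemLp f p μ) : MemLp (fun x => φ x • f x) p μ :=
  hf.of_le_mul (hφ.smul hf.1) <| hR.mono fun x hx => by
    rw [norm_smul, Real.norm_eq_abs]; gcongr

theorem lpNorm_smul_le_of_ae_abs_le (hR₀ : 0 ≤ R) (hφ : AEStronglyMeasurable φ μ)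
    (hR : ∀ᵐ x ∂μ, |φ x| ≤ R) (hf : MemLp f p μ) :
    lpNorm (fun x => φ x • f x) p μ ≤ R * lpNorm f p μ := by
  have hle : eLpNorm (fun x => φ x • f x) p μ ≤ ENNReal.ofReal R * eLpNorm f p μ :=
    eLpNorm_le_mul_eLpNorm_of_ae_le_mul (hR.mono fun x hx => by
      rw [norm_smul, Real.norm_eq_abs]; gcongr) p
  rw [← toReal_eLpNorm (memLp_smul_of_ae_abs_le hφ hR hf).1, ← toReal_eLpNorm hf.1]
  simpa [hR₀] using ENNReal.toReal_mono (ENNReal.mul_ne_top ENNReal.ofReal_ne_top hf.2.ne) hle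

end WeightedMinkowski

section HorizontalDerivatives

variable {n : ℕ} {D : Set (Fin (2 * n + 1) → ℝ)} {f g : (Fin (2 * n + 1) → ℝ) → E}

theorem XI_append_singleton (I : List (Fin (2 * n))) (j : Fin (2 * n))
    (f : (Fin (2 * n + 1) → ℝ) → E) : XI n (I ++ [j]) f = XI n I (hDeriv n j f) := by
  induction I with
  | nil => rfl
  | cons i I ih => simp only [List.cons_append, XI, ih]

theorem eqOn_hDeriv (hD : IsOpen D) (hfg : EqOn f g D) (j : Fin (2 * n)) :
    EqOn (hDeriv n j f) (hDeriv n j g) D := fun x hx => by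
  simp only [hDeriv, (hfg.eventuallyEq_of_mem (hD.mem_nhds hx)).fderiv_eq]

theorem eqOn_XI (hD : IsOpen D) (hfg : EqOn f g D) (I : List (Fin (2 * n))) :
    EqOn (XI n I f) (XI n I g) D := by
  induction I with
  | nil => exact hfg
  | cons j I ih => exact eqOn_hDeriv hD ih j

theorem XI_neg (I : List (Fin (2 * n))) (f : (Fin (2 * n + 1) → ℝ) → E) :
    XI n I (-f) = -XI n I f := by
  induction I with
  | nil => rfl
  | cons j I ih => funext x; simp [XI, ih, hDeriv, fderiv_neg]

theorem contDiff_Xvec (j : Fin (2 * n)) : ContDiff ℝ ∞ (Xvec n j) := by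
  unfold Xvec
  split_ifs <;> fun_prop

theorem exists_contDiffOn_closure_eqOn_XI (hD : IsOpen D) (hf : ContDiffOn ℝ ∞ f (closure D))
    (I : List (Fin (2 * n))) : ∃ h, ContDiffOn ℝ ∞ h (closure D) ∧ EqOn h (XI n I f) D := by
  induction I with
  | nil => exact ⟨f, hf, fun _ _ => rfl⟩
  | cons j I ih =>
    obtain ⟨h, hh, hhf⟩ := ih
    refine ⟨fun x => extendFrom D (fderiv ℝ h) x (Xvec n j x),
      (contDiffOn_extendFrom_fderiv hD hh).clm_apply (contDiff_Xvec j).contDiffOn, ?_⟩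
    have hcont : ContinuousOn (fderiv ℝ h) D :=
      (hh.mono subset_closure).continuousOn_fderiv_of_isOpen hD (by simp)
    intro x hx
    calc extendFrom D (fderiv ℝ h) x (Xvec n j x) = hDeriv n j h x := by
          rw [extendFrom_extends hcont x hx, hDeriv]
      _ = XI n (j :: I) f x := eqOn_hDeriv hD hhf j hx

end HorizontalDerivatives

section FollandStein

variable {n s : ℕ} {D : Set (Fin (2 * n + 1) → ℝ)} {f g : (Fin (2 * n + 1) → ℝ) → E}

/-- `f` has finite Folland–Stein norm of order `s` on `D`: every integral in `fsNormSq n D s f`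
converges, so that none of them takes the default value `0` of a divergent integral. -/
def HasFiniteFSNorm (n : ℕ) (D : Set (Fin (2 * n + 1) → ℝ)) (s : ℕ)
    (f : (Fin (2 * n + 1) → ℝ) → E) : Prop :=
  ∀ I : List (Fin (2 * n)), I.length ≤ s → IntegrableOn (fun x => ‖XI n I f x‖ ^ 2) D

theorem hasFiniteFSNorm_of_contDiffOn_closure (hD : IsOpen D) (hDb : IsBounded D)
    (hf : ContDiffOn ℝ ∞ f (closure D)) : HasFiniteFSNorm n D s f := by
  intro I _
  obtain ⟨h, hh, hhf⟩ := exists_contDiffOn_closure_eqOn_XI hD hf I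
  have hint : IntegrableOn (fun x => ‖h x‖ ^ 2) D :=
    ((hh.continuousOn.norm.pow 2).integrableOn_compact hDb.isCompact_closure).mono_set
      subset_closure
  exact hint.congr_fun (fun x hx => by simp only [hhf hx]) hD.measurableSet

theorem hasFiniteFSNorm_succ (h₀ : IntegrableOn (fun x => ‖f x‖ ^ 2) D)
    (h : ∀ j, HasFiniteFSNorm n D s (hDeriv n j f)) : HasFiniteFSNorm n D (s + 1) f := by
  intro I hI
  rcases I.eq_nil_or_concat' with rfl | ⟨J, j, rfl⟩
  · exact h₀
  · rw [XI_append_singleton]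
    exact h j J (by simpa using hI)

theorem HasFiniteFSNorm.congr (hf : HasFiniteFSNorm n D s f) (hD : IsOpen D) (hfg : EqOn f g D) :
    HasFiniteFSNorm n D s g := fun I hI =>
  (hf I hI).congr_fun (fun x hx => by simp only [eqOn_XI hD hfg I hx]) hD.measurableSet

theorem HasFiniteFSNorm.neg (hf : HasFiniteFSNorm n D s f) : HasFiniteFSNorm n D s (-f) :=
  fun I hI => by simpa only [XI_neg, Pi.neg_apply, norm_neg] using hf I hI

theorem HasFiniteFSNorm.memLp_two (hf : HasFiniteFSNorm n D s f)
    (hfm : AEStronglyMeasurable f (volume.restrict D)) : MemLp f 2 (volume.restrict D) :=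
  (memLp_two_iff_integrable_sq_norm hfm).2 (hf [] (Nat.zero_le s))

theorem integral_norm_XI_sq_nonneg (D : Set (Fin (2 * n + 1) → ℝ)) (I : List (Fin (2 * n)))
    (f : (Fin (2 * n + 1) → ℝ) → E) : 0 ≤ ∫ x in D, ‖XI n I f x‖ ^ 2 :=
  integral_nonneg fun _ => sq_nonneg _

theorem fsNormSq_nonneg (n : ℕ) (D : Set (Fin (2 * n + 1) → ℝ)) (s : ℕ)
    (f : (Fin (2 * n + 1) → ℝ) → E) : 0 ≤ fsNormSq n D s f :=
  Finset.sum_nonneg fun _ _ => Finset.sum_nonneg fun _ _ => integral_norm_XI_sq_nonneg D _ f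

theorem fsNorm_nonneg (n : ℕ) (D : Set (Fin (2 * n + 1) → ℝ)) (s : ℕ)
    (f : (Fin (2 * n + 1) → ℝ) → E) : 0 ≤ fsNorm n D s f :=
  Real.sqrt_nonneg _

theorem sq_fsNorm (n : ℕ) (D : Set (Fin (2 * n + 1) → ℝ)) (s : ℕ)
    (f : (Fin (2 * n + 1) → ℝ) → E) : fsNorm n D s f ^ 2 = fsNormSq n D s f :=
  Real.sq_sqrt (fsNormSq_nonneg n D s f)

theorem fsNorm_mono {t : ℕ} (hst : s ≤ t) (f : (Fin (2 * n + 1) → ℝ) → E) :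
    fsNorm n D s f ≤ fsNorm n D t f :=
  Real.sqrt_le_sqrt <| Finset.sum_le_sum_of_subset_of_nonneg
    (Finset.range_subset_range.2 (by omega)) fun _ _ _ =>
      Finset.sum_nonneg fun _ _ => integral_norm_XI_sq_nonneg D _ f

theorem fsNorm_congr (hD : IsOpen D) (hfg : EqOn f g D) : fsNorm n D s f = fsNorm n D s g := by
  refine congrArg Real.sqrt (Finset.sum_congr rfl fun t _ => Finset.sum_congr rfl fun I _ => ?_)
  exact setIntegral_congr_fun hD.measurableSet fun x hx => by simp only [eqOn_XI hD hfg _ hx]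

theorem fsNorm_neg (f : (Fin (2 * n + 1) → ℝ) → E) : fsNorm n D s (-f) = fsNorm n D s f := by
  simp only [fsNorm, fsNormSq, XI_neg, Pi.neg_apply, norm_neg]

theorem fsNormSq_zero (f : (Fin (2 * n + 1) → ℝ) → E) :
    fsNormSq n D 0 f = ∫ x in D, ‖f x‖ ^ 2 := by
  simp [fsNormSq, XI]

theorem fsNorm_zero_eq_lpNorm (hf : AEStronglyMeasurable f (volume.restrict D)) :
    fsNorm n D 0 f = lpNorm f 2 (volume.restrict D) := by
  rw [fsNorm, fsNormSq_zero, Real.sqrt_eq_rpow,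
    lpNorm_eq_integral_norm_rpow_toReal two_ne_zero ENNReal.ofNat_ne_top hf]
  simp

theorem fsNormSq_succ (f : (Fin (2 * n + 1) → ℝ) → E) :
    fsNormSq n D (s + 1) f = fsNormSq n D 0 f + ∑ j, fsNormSq n D s (hDeriv n j f) := by
  have hterm (t : ℕ) : ∑ I : Fin (t + 1) → Fin (2 * n), ∫ x in D, ‖XI n (List.ofFn I) f x‖ ^ 2 =
      ∑ j, ∑ I : Fin t → Fin (2 * n), ∫ x in D, ‖XI n (List.ofFn I) (hDeriv n j f) x‖ ^ 2 := by
    rw [← Fintype.sum_prod_type', ← (Fin.snocEquiv fun _ => Fin (2 * n)).sum_comp]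
    refine Finset.sum_congr rfl fun jI _ => ?_
    simp only [Fin.snocEquiv, Equiv.coe_fn_mk, List.ofFn_succ', Fin.snoc_castSucc, Fin.snoc_last,
      List.concat_eq_append, XI_append_singleton]
  rw [fsNormSq, Finset.sum_range_succ', add_comm, Finset.sum_congr rfl fun t _ => hterm t,
    Finset.sum_comm]
  simp [fsNormSq]

theorem fsNorm_succ_le (f : (Fin (2 * n + 1) → ℝ) → E) :
    fsNorm n D (s + 1) f ≤ fsNorm n D 0 f + ∑ j, fsNorm n D s (hDeriv n j f) := by
  have h₀ := fsNorm_nonneg n D 0 f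
  have hj : ∀ j ∈ Finset.univ, 0 ≤ fsNorm n D s (hDeriv n j f) := fun _ _ => fsNorm_nonneg ..
  have hsum := Finset.sum_nonneg hj
  refine Real.sqrt_le_iff.2 ⟨add_nonneg h₀ hsum, ?_⟩
  calc fsNormSq n D (s + 1) f
      = fsNorm n D 0 f ^ 2 + ∑ j, fsNorm n D s (hDeriv n j f) ^ 2 := by
        simp only [sq_fsNorm, fsNormSq_succ]
    _ ≤ fsNorm n D 0 f ^ 2 + (∑ j, fsNorm n D s (hDeriv n j f)) ^ 2 := by
        grw [Finset.sum_sq_le_sq_sum_of_nonneg hj]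
    _ ≤ (fsNorm n D 0 f + ∑ j, fsNorm n D s (hDeriv n j f)) ^ 2 := by
        nlinarith [mul_nonneg h₀ hsum]

end FollandStein

section ContactFields

variable {n s : ℕ} {D : Set (Fin (2 * n + 1) → ℝ)}
  {X : (Fin (2 * n + 1) → ℝ) → (Fin (2 * n + 1) → ℝ)}

/-- The horizontal index `j` of the position coordinate `x^j` (`j < n`); the corresponding
coordinate index in `Fin (2 * n + 1)` is `(qIndex j).castSucc`. -/
def qIndex (j : Fin n) : Fin (2 * n) := ⟨j, by omega⟩

/-- The horizontal index `n + j` of the momentum coordinate `x^{n+j}` conjugate to `x^j`; the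
corresponding coordinate index in `Fin (2 * n + 1)` is `(pIndex j).castSucc`. -/
def pIndex (j : Fin n) : Fin (2 * n) := ⟨n + j, by omega⟩

theorem sum_univ_eq_sum_qIndex_add_sum_pIndex {M : Type*} [AddCommMonoid M]
    (a : Fin (2 * n) → M) : ∑ i, a i = ∑ j, a (qIndex j) + ∑ j, a (pIndex j) := by
  rw [← (finCongr (two_mul n).symm).sum_comp, Fin.sum_univ_add]
  rfl

theorem eta0_eq (x v : Fin (2 * n + 1) → ℝ) :
    eta0 n x v =
      v (Fin.last _) - ∑ j : Fin n, x (pIndex j).castSucc * v (qIndex j).castSucc :=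
  rfl

theorem dEta0_eq (u v : Fin (2 * n + 1) → ℝ) :
    dEta0 n u v = ∑ j : Fin n,
      (u (qIndex j).castSucc * v (pIndex j).castSucc -
        u (pIndex j).castSucc * v (qIndex j).castSucc) :=
  rfl

theorem Xvec_qIndex (j : Fin n) (x : Fin (2 * n + 1) → ℝ) :
    Xvec n (qIndex j) x =
      Pi.single (qIndex j).castSucc 1 + x (pIndex j).castSucc • Pi.single (Fin.last _) 1 :=
  dif_pos j.2

theorem Xvec_pIndex (j : Fin n) (x : Fin (2 * n + 1) → ℝ) :
    Xvec n (pIndex j) x = Pi.single (pIndex j).castSucc 1 :=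
  dif_neg (Nat.not_lt.2 (Nat.le_add_right n j))

theorem qIndex_inj {j k : Fin n} : qIndex j = qIndex k ↔ j = k := by
  simp [qIndex, Fin.ext_iff]

theorem pIndex_inj {j k : Fin n} : pIndex j = pIndex k ↔ j = k := by
  simp [pIndex, Fin.ext_iff]

theorem qIndex_ne_pIndex (j k : Fin n) : qIndex j ≠ pIndex k := by
  simp only [qIndex, pIndex, ne_eq, Fin.ext_iff]
  omega

theorem dEta0_Xvec_qIndex (j : Fin n) (u x : Fin (2 * n + 1) → ℝ) :
    dEta0 n u (Xvec n (qIndex j) x) = -u (pIndex j).castSucc := by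
  simp [dEta0_eq, Xvec_qIndex, Pi.single_apply, qIndex_inj, (qIndex_ne_pIndex _ _).symm]

theorem dEta0_Xvec_pIndex (j : Fin n) (u x : Fin (2 * n + 1) → ℝ) :
    dEta0 n u (Xvec n (pIndex j) x) = u (qIndex j).castSucc := by
  simp [dEta0_eq, Xvec_pIndex, Pi.single_apply, pIndex_inj, qIndex_ne_pIndex]

theorem IsContactVF.eqOn_hDeriv_qIndex (hX : IsContactVF n D X) (j : Fin n) :
    EqOn (fun x => X x (pIndex j).castSucc)
      (hDeriv n (qIndex j) fun x => eta0 n x (X x)) D := fun x hx => by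
  linarith [hX (qIndex j) x hx, dEta0_Xvec_qIndex j (X x) x]

theorem IsContactVF.eqOn_hDeriv_pIndex (hX : IsContactVF n D X) (j : Fin n) :
    EqOn (-fun x => X x (qIndex j).castSucc)
      (hDeriv n (pIndex j) fun x => eta0 n x (X x)) D := fun x hx => by
  rw [Pi.neg_apply]
  linarith [hX (pIndex j) x hx, dEta0_Xvec_pIndex j (X x) x]

theorem IsContactVF.sum_fsNorm_hDeriv_eta0 (hX : IsContactVF n D X) (hD : IsOpen D) (s : ℕ) :
    ∑ j, fsNorm n D s (hDeriv n j fun x => eta0 n x (X x)) =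
      ∑ i : Fin (2 * n), fsNorm n D s fun x => X x i.castSucc := by
  rw [sum_univ_eq_sum_qIndex_add_sum_pIndex, sum_univ_eq_sum_qIndex_add_sum_pIndex, add_comm]
  simp only [← fsNorm_congr hD (hX.eqOn_hDeriv_qIndex _),
    ← fsNorm_congr hD (hX.eqOn_hDeriv_pIndex _), fsNorm_neg]

theorem IsContactVF.hasFiniteFSNorm_hDeriv_eta0 (hX : IsContactVF n D X) (hD : IsOpen D)
    (hfin : ∀ i, HasFiniteFSNorm n D s fun x => X x i) (j : Fin (2 * n)) :
    HasFiniteFSNorm n D s (hDeriv n j fun x => eta0 n x (X x)) := by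
  obtain ⟨k, rfl⟩ | ⟨k, rfl⟩ : (∃ k, qIndex k = j) ∨ ∃ k, pIndex k = j := by
    rcases lt_or_ge (j : ℕ) n with h | h
    · exact .inl ⟨⟨j, h⟩, rfl⟩
    · exact .inr ⟨⟨j - n, by omega⟩, Fin.ext (by simp only [pIndex]; omega)⟩
  · exact (hfin _).congr hD (hX.eqOn_hDeriv_qIndex k)
  · exact (hfin _).neg.congr hD (hX.eqOn_hDeriv_pIndex k)

variable {μ : Measure (Fin (2 * n + 1) → ℝ)} {p : ENNReal} {R : ℝ}

theorem memLp_eta0 (hR : ∀ᵐ x ∂μ, ∀ j : Fin n, |x (pIndex j).castSucc| ≤ R)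
    (hX : ∀ i, MemLp (fun x => X x i) p μ) : MemLp (fun x => eta0 n x (X x)) p μ :=
  (hX _).sub <| memLp_finsetSum _ fun j _ =>
    memLp_smul_of_ae_abs_le (measurable_pi_apply _).aestronglyMeasurable
      (hR.mono fun _ hx => hx j) (hX _)

theorem lpNorm_eta0_le (hp : 1 ≤ p) (hR₀ : 0 ≤ R)
    (hR : ∀ᵐ x ∂μ, ∀ j : Fin n, |x (pIndex j).castSucc| ≤ R)
    (hX : ∀ i, MemLp (fun x => X x i) p μ) :
    lpNorm (fun x => eta0 n x (X x)) p μ ≤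
      lpNorm (fun x => X x (Fin.last _)) p μ +
        R * ∑ j : Fin n, lpNorm (fun x => X x (qIndex j).castSucc) p μ := by
  set F : Fin n → (Fin (2 * n + 1) → ℝ) → ℝ :=
    fun j x => x (pIndex j).castSucc • X x (qIndex j).castSucc
  have hF : ∀ j ∈ Finset.univ, MemLp (F j) p μ := fun j _ =>
    memLp_smul_of_ae_abs_le (measurable_pi_apply _).aestronglyMeasurable
      (hR.mono fun _ hx => hx j) (hX _)
  have heta : (fun x => eta0 n x (X x)) = (fun x => X x (Fin.last _)) - ∑ j, F j := by
    funext x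
    simp [eta0_eq, F]
  calc lpNorm (fun x => eta0 n x (X x)) p μ
      ≤ lpNorm (fun x => X x (Fin.last _)) p μ + ∑ j, lpNorm (F j) p μ := by
        grw [heta, lpNorm_sub_le (hX _) hp, lpNorm_sum_le hF hp]
    _ ≤ _ := by
        rw [Finset.mul_sum]
        gcongr with j
        exact lpNorm_smul_le_of_ae_abs_le hR₀ (measurable_pi_apply _).aestronglyMeasurable
          (hR.mono fun _ hx => hx j) (hX _)

theorem fsNorm_zero_eta0_le (hD : IsOpen D) (hR₀ : 0 ≤ R)
    (hR : ∀ x ∈ D, ∀ j : Fin n, |x (pIndex j).castSucc| ≤ R)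
    (hX : ∀ i, MemLp (fun x => X x i) 2 (volume.restrict D)) :
    fsNorm n D 0 (fun x => eta0 n x (X x)) ≤
      fsNorm n D 0 (fun x => X x (Fin.last _)) +
        R * ∑ j : Fin n, fsNorm n D 0 (fun x => X x (qIndex j).castSucc) := by
  have hR' := ae_restrict_of_forall_mem (μ := volume) hD.measurableSet hR
  simp only [fsNorm_zero_eq_lpNorm (hX _).1, fsNorm_zero_eq_lpNorm (memLp_eta0 hR' hX).1]
  exact lpNorm_eta0_le one_le_two hR₀ hR' hX

end ContactFields

theorem statement13_general {n s : ℕ} {D : Set (Fin (2 * n + 1) → ℝ)} (hD : IsOpen D) {R : ℝ}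
    (hR₀ : 0 ≤ R) (hR : ∀ x ∈ D, ∀ j : Fin n, |x (pIndex j).castSucc| ≤ R)
    {X : (Fin (2 * n + 1) → ℝ) → (Fin (2 * n + 1) → ℝ)} (hX : ContDiffOn ℝ ∞ X D)
    (hfin : ∀ i, HasFiniteFSNorm n D s fun x => X x i) (hc : IsContactVF n D X) :
    HasFiniteFSNorm n D (s + 1) (fun x => eta0 n x (X x)) ∧
      fsNorm n D (s + 1) (fun x => eta0 n x (X x)) ≤
        (1 + R) * ∑ i, fsNorm n D s fun x => X x i := by
  have hL2 (i) : MemLp (fun x => X x i) 2 (volume.restrict D) := (hfin i).memLp_two <|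
    ((continuous_apply i).comp_continuousOn hX.continuousOn).aestronglyMeasurable hD.measurableSet
  have hgL2 := memLp_eta0 (ae_restrict_of_forall_mem hD.measurableSet hR) hL2
  refine ⟨hasFiniteFSNorm_succ ((memLp_two_iff_integrable_sq_norm hgL2.1).1 hgL2)
    (hc.hasFiniteFSNorm_hDeriv_eta0 hD hfin), ?_⟩
  set N : Fin (2 * n + 1) → ℝ := fun i => fsNorm n D s fun x => X x i
  have hN (i) : 0 ≤ N i := fsNorm_nonneg ..
  have hq : ∑ j : Fin n, N (qIndex j).castSucc ≤ ∑ i : Fin (2 * n), N i.castSucc := by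
    rw [sum_univ_eq_sum_qIndex_add_sum_pIndex]
    exact le_add_of_nonneg_right (Finset.sum_nonneg fun _ _ => hN _)
  calc fsNorm n D (s + 1) (fun x => eta0 n x (X x))
      ≤ fsNorm n D 0 (fun x => eta0 n x (X x)) + ∑ i : Fin (2 * n), N i.castSucc := by
        rw [← hc.sum_fsNorm_hDeriv_eta0 hD]
        exact fsNorm_succ_le _
    _ ≤ N (Fin.last _) + R * ∑ j : Fin n, N (qIndex j).castSucc +
          ∑ i : Fin (2 * n), N i.castSucc := by
        grw [fsNorm_zero_eta0_le hD hR₀ hR hL2]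
        gcongr <;> exact fsNorm_mono (Nat.zero_le s) _
    _ ≤ N (Fin.last _) + R * ∑ i : Fin (2 * n), N i.castSucc +
          ∑ i : Fin (2 * n), N i.castSucc := by grw [hq]
    _ ≤ (1 + R) * ∑ i, N i := by
        rw [Fin.sum_univ_castSucc]
        nlinarith [mul_nonneg hR₀ (hN (Fin.last _))]

/-- the generating function `g = η₀(X)` of a smooth contact vector
field gains one derivative: `‖g‖_{D,s+1} ≤ C Σ_i ‖X^i‖_{D,s}`. -/
theorem statement13 (n s : ℕ) (hn : 1 ≤ n)
    (D : Set (Fin (2*n+1) → ℝ)) (hD : IsOpen D) (hDb : IsBounded D) :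
    ∃ C > (0:ℝ), ∀ X : (Fin (2*n+1) → ℝ) → (Fin (2*n+1) → ℝ),
      ContDiffOn ℝ (⊤:ℕ∞) X (closure D) → IsContactVF n D X →
      fsNorm n D (s+1) (fun x => eta0 n x (X x)) ≤
        C * ∑ i : Fin (2*n+1), fsNorm n D s (fun x => X x i) := by
  obtain ⟨R, hR₀, hR⟩ := hDb.exists_pos_norm_le
  refine ⟨1 + R, by positivity, fun X hX hc => (statement13_general hD hR₀.le
    (fun x hx j => (norm_le_pi_norm x _).trans (hR x hx)) (hX.mono subset_closure)
    (fun i => hasFiniteFSNorm_of_contDiffOn_closure hD hDb (contDiffOn_pi.1 hX i)) hc).2⟩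

end
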